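/- arXiv:1309.0441 — 2 statements merged into one kernel-verified Lean document; each statement's English description precedes it below -/
import Mathlib

section
/- There exist n ∈ ℕ and a polynomial f ∈ ℤ[X₁,…,Xₙ] such that the set of prime numbers equals the set of positive values taken by f on ℤⁿ; that is, for every natural number m: m is prime if and only if m > 0 and there exists x ∈ ℤⁿ with f(x₁,…,xₙ) = m. -/
/-!
By Wilson's theorem `m` is prime iff `m ≠ 1` and `m ∣ (m - 1)! + 1`. Matiyasevic's theorem makes
exponentiation Diophantine, and two classical formulas then do the same for binomial coefficients
(the base-`u` digits of `(u + 1) ^ n`, for `u` large) and for factorials (`n!` is the integer part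
of `r ^ n / r.choose n`, for `r` large). So primality of `m` is equivalent to the solvability in
natural numbers `t` of some polynomial equation `P(m, t) = 0`. Putnam's trick turns the equation
into values: `m * (1 - P(m, t) ^ 2)` is positive only if `P(m, t) = 0`, and then it is `m`. Finally,
by Lagrange's theorem, sums of four integer squares can be substituted for the natural variables.
-/

open scoped Nat

theorem ofDigits_map_range {R : Type*} [Semiring R] (b : R) (a : ℕ → ℕ) (n : ℕ) :
    Nat.ofDigits b ((List.range n).map a) = ∑ i ∈ Finset.range n, (a i : R) * b ^ i := by
  induction n generalizing a with
  | zero => rfl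
  | succ n ih =>
    rw [List.range_succ_eq_map, List.map_cons, List.map_map, Nat.ofDigits, ih,
      Finset.sum_range_succ', Finset.mul_sum, pow_zero, mul_one, add_comm]
    congr 1
    refine Finset.sum_congr rfl fun i _ => ?_
    rw [pow_succ', ((a (i + 1)).cast_commute b).left_comm, Function.comp_apply]

theorem digits_add_one_pow {n u : ℕ} (hu : ∀ k, n.choose k < u) :
    Nat.digits u ((u + 1) ^ n) = (List.range (n + 1)).map n.choose := by
  have hu_one : 1 < u := by simpa using hu 0
  have hpow : (u + 1) ^ n = Nat.ofDigits u ((List.range (n + 1)).map n.choose) := by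
    simp [ofDigits_map_range, add_pow, mul_comm]
  rw [hpow, Nat.digits_ofDigits u hu_one]
  · simp [hu]
  · simp [List.getLast_map]

theorem choose_eq_pow_div_pow_mod {n u : ℕ} (hu : ∀ k, n.choose k < u) (k : ℕ) :
    n.choose k = (u + 1) ^ n / u ^ k % u := by
  have hu_one : 1 < u := by simpa using hu 0
  rw [← Nat.getD_digits _ _ hu_one, digits_add_one_pow hu]
  rcases lt_or_ge k (n + 1) with hk | hk
  · simp [hk]
  · have hlen : ((List.range (n + 1)).map n.choose).length ≤ k := by simpa using hk
    rw [Nat.choose_eq_zero_of_lt hk, List.getD_eq_default _ _ hlen]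

/-- Union bound over pairs: at most `n.choose 2 * r ^ (n - 1)` of the `r ^ n` maps from `n` points
to `r` points are not injective. The extra factor `r` on both sides avoids the exponent `n - 1`. -/
theorem mul_pow_le_mul_descFactorial_add (r n : ℕ) :
    r * r ^ n ≤ r * r.descFactorial n + n.choose 2 * r ^ n := by
  induction n with
  | zero => simp
  | succ n ih =>
    have hstep : r * r.descFactorial n ≤ r.descFactorial (n + 1) + n * r ^ n := by
      calc r * r.descFactorial n
          ≤ (r - n + n) * r.descFactorial n := by gcongr; exact le_tsub_add
        _ = r.descFactorial (n + 1) + n * r.descFactorial n := by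
            rw [add_mul, Nat.descFactorial_succ]
        _ ≤ r.descFactorial (n + 1) + n * r ^ n := by
            gcongr; exact Nat.descFactorial_le_pow r n
    calc r * r ^ (n + 1) = r * (r * r ^ n) := by ring
      _ ≤ r * (r * r.descFactorial n + n.choose 2 * r ^ n) := by gcongr
      _ ≤ r * (r.descFactorial (n + 1) + n * r ^ n + n.choose 2 * r ^ n) := by gcongr
      _ = r * r.descFactorial (n + 1) + (n + 1).choose 2 * r ^ (n + 1) := by
          rw [Nat.choose_succ_succ' n 1, Nat.choose_one_right]; ring

theorem factorial_eq_pow_div_choose {n r : ℕ} (hr : n.choose 2 * (n ! + 1) < r) :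
    n ! = r ^ n / r.choose n := by
  have hr_pos : 0 < r := by lia
  have hdesc : r.descFactorial n = n ! * r.choose n := Nat.descFactorial_eq_factorial_mul_choose r n
  refine (Nat.div_eq_of_lt_le ?_ ?_).symm
  · rw [← hdesc]
    exact Nat.descFactorial_le_pow r n
  · have hbound := Nat.mul_le_mul_left (n ! + 1) (mul_pow_le_mul_descFactorial_add r n)
    have hlarge : n.choose 2 * (n ! + 1) * r ^ n < r * r ^ n := by gcongr
    have hscaled : r * n ! * r ^ n < r * n ! * ((n ! + 1) * r.choose n) := by
      rw [hdesc] at hbound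
      linarith
    exact lt_of_mul_lt_mul_left hscaled (Nat.zero_le _)

theorem prime_iff_ne_one_and_dvd_factorial_add_one (m : ℕ) :
    m.Prime ↔ m ≠ 1 ∧ m ∣ (m - 1)! + 1 := by
  have hdvd : m ∣ (m - 1)! + 1 ↔ ((m - 1)! : ZMod m) = -1 := by
    rw [← ZMod.natCast_eq_zero_iff, Nat.cast_succ, add_eq_zero_iff_eq_neg]
  rw [hdvd]
  exact ⟨fun hm => ⟨hm.ne_one, (Nat.prime_iff_fac_equiv_neg_one hm.ne_one).1 hm⟩,
    fun ⟨hm, hfac⟩ => (Nat.prime_iff_fac_equiv_neg_one hm).2 hfac⟩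

section Diophantine

open Dioph

variable {α : Type} {f g : (α → ℕ) → ℕ}

theorem choose_dioph (hf : DiophFn f) (hg : DiophFn g) :
    DiophFn fun v => (f v).choose (g v) := by
  have hlt (n k : ℕ) : n.choose k < 2 ^ n + 1 := Nat.lt_succ_of_le (Nat.choose_le_two_pow n k)
  have hbase : DiophFn fun v => 2 ^ f v + 1 := pow_dioph (D.2) hf D+ D.1
  simp only [fun n => choose_eq_pow_div_pow_mod (hlt n)]
  exact pow_dioph (hbase D+ D.1) hf D/ pow_dioph hbase hg D% hbase

theorem factorial_dioph (hf : DiophFn f) : DiophFn fun v => (f v)! := by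
  have hlt (n : ℕ) : n.choose 2 * (n ! + 1) < n.choose 2 * (n ^ n + 1) + 1 :=
    Nat.lt_succ_of_le (by gcongr; exact Nat.factorial_le_pow n)
  have hbase : DiophFn fun v => (f v).choose 2 * (f v ^ f v + 1) + 1 :=
    choose_dioph hf (D.2) D* (pow_dioph hf hf D+ D.1) D+ D.1
  simp only [fun n => factorial_eq_pow_div_choose (hlt n)]
  exact pow_dioph hbase hf D/ choose_dioph hbase hf

theorem prime_dioph (hf : DiophFn f) : Dioph {v | (f v).Prime} := by
  simp only [prime_iff_ne_one_and_dvd_factorial_add_one]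
  exact (hf D≠ D.1) D∧ (hf D∣ factorial_dioph (hf D- D.1) D+ D.1)

end Diophantine

section PolynomialValues

open MvPolynomial

universe u

theorem exists_mvPolynomial_eval_eq_poly {α : Type*} (p : Poly α) :
    ∃ P : MvPolynomial α ℤ, ∀ v : α → ℕ, eval (fun i => (v i : ℤ)) P = p v := by
  induction p using Poly.induction with
  | H1 i => exact ⟨X i, by simp⟩
  | H2 n => exact ⟨C n, by simp⟩
  | H3 p q hp hq =>
    obtain ⟨P, hP⟩ := hp
    obtain ⟨Q, hQ⟩ := hq
    exact ⟨P - Q, by simp [hP, hQ]⟩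
  | H4 p q hp hq =>
    obtain ⟨P, hP⟩ := hp
    obtain ⟨Q, hQ⟩ := hq
    exact ⟨P * Q, by simp [hP, hQ]⟩

theorem eq_zero_of_mul_one_sub_sq_pos {a b : ℤ} (ha : 0 ≤ a) (h : 0 < a * (1 - b ^ 2)) : b = 0 := by
  have hb : b ^ 2 < 1 := sub_pos.1 (pos_of_mul_pos_right h ha)
  rwa [sq_lt_one_iff_abs_lt_one, Int.abs_lt_one_iff] at hb

theorem exists_mem_iff_mem_range_eval_nat_of_dioph {α : Type u} {a : α} {S : Set ℕ}
    (hS : Dioph {v : α → ℕ | v a ∈ S}) :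
    ∃ (σ : Type u) (Q : MvPolynomial σ ℤ), ∀ m : ℕ, 0 < m →
      (m ∈ S ↔ (m : ℤ) ∈ Set.range fun w : σ → ℕ => eval (fun i => (w i : ℤ)) Q) := by
  obtain ⟨β, p, hp⟩ := hS
  obtain ⟨P, hP⟩ := exists_mvPolynomial_eval_eq_poly p
  refine ⟨α ⊕ β, X (Sum.inl a) * (1 - P ^ 2), fun m hm => ?_⟩
  simp only [Set.mem_range, map_mul, map_sub, map_one, map_pow, eval_X, hP]
  constructor
  · intro hmS
    obtain ⟨t, ht⟩ := (hp fun _ => m).1 hmS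
    exact ⟨Sum.elim (fun _ => m) t, by simp [ht]⟩
  · rintro ⟨w, hw⟩
    have hpos : 0 < (w (Sum.inl a) : ℤ) * (1 - p w ^ 2) := by rw [hw]; exact_mod_cast hm
    have hzero : p w = 0 := eq_zero_of_mul_one_sub_sq_pos (Int.natCast_nonneg _) hpos
    have hwm : w (Sum.inl a) = m := by simpa [hzero] using hw
    rw [← hwm]
    exact (hp (w ∘ Sum.inl)).2 ⟨w ∘ Sum.inr, by rwa [Sum.elim_comp_inl_inr]⟩

/-- The family of sums of four squares `x (i, 0) ^ 2 + ⋯ + x (i, 3) ^ 2`, which parametrizes tuples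
of natural numbers by tuples of integers. -/
def fourSquares {σ : Type*} (x : σ × Fin 4 → ℤ) (i : σ) : ℕ :=
  ∑ j, (x (i, j)).natAbs ^ 2

theorem fourSquares_surjective {σ : Type*} : Function.Surjective (fourSquares (σ := σ)) := by
  intro w
  choose a b c d habcd using fun i => Nat.sum_four_squares (w i)
  refine ⟨fun ij => ![(a ij.1 : ℤ), b ij.1, c ij.1, d ij.1] ij.2, funext fun i => ?_⟩
  simp [fourSquares, Fin.sum_univ_four, habcd]

theorem exists_range_eval_int_eq_range_eval_nat {σ : Type*} (Q : MvPolynomial σ ℤ) :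
    ∃ Q' : MvPolynomial (σ × Fin 4) ℤ,
      Set.range (fun x => eval x Q') =
        Set.range fun w : σ → ℕ => eval (fun i => (w i : ℤ)) Q := by
  refine ⟨bind₁ (fun i => ∑ j, X (i, j) ^ 2) Q, ?_⟩
  rw [← fourSquares_surjective.range_comp]
  congr 1
  funext x
  rw [Function.comp_apply, ← coe_aeval_eq_eval, RingHom.coe_coe, aeval_bind₁]
  simp [fourSquares]

theorem exists_fin_range_eval_eq_range_eval {σ R : Type*} [CommSemiring R] (f : MvPolynomial σ R) :
    ∃ (n : ℕ) (q : MvPolynomial (Fin n) R),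
      Set.range (fun y => eval y q) = Set.range fun x => eval x f := by
  obtain ⟨n, e, he, q, rfl⟩ := exists_fin_rename f
  refine ⟨n, q, ?_⟩
  rw [← he.surjective_comp_right.range_comp]
  simp only [eval_rename, Function.comp_def]

theorem exists_mem_iff_exists_eval_int_eq_of_dioph {α : Type*} {a : α} {S : Set ℕ}
    (hS : Dioph {v : α → ℕ | v a ∈ S}) :
    ∃ (n : ℕ) (f : MvPolynomial (Fin n) ℤ), ∀ m : ℕ, 0 < m →
      (m ∈ S ↔ ∃ x : Fin n → ℤ, eval x f = m) := by
  obtain ⟨σ, Q, hQ⟩ := exists_mem_iff_mem_range_eval_nat_of_dioph hS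
  obtain ⟨Q', hQ'⟩ := exists_range_eval_int_eq_range_eval_nat Q
  obtain ⟨n, f, hf⟩ := exists_fin_range_eval_eq_range_eval Q'
  exact ⟨n, f, by simpa only [← hQ', ← hf, Set.mem_range] using hQ⟩

end PolynomialValues

/-- There is a prime-producing polynomial: an integer polynomial whose set of positive
values on integer tuples is exactly the set of prime numbers. -/
theorem exists_prime_producing_polynomial :
    ∃ (n : ℕ) (f : MvPolynomial (Fin n) ℤ),
      ∀ m : ℕ, m.Prime ↔ (0 < m ∧ ∃ x : Fin n → ℤ, MvPolynomial.eval x f = (m : ℤ)) := by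
  have hprime : Dioph {v : Unit → ℕ | v () ∈ {m : ℕ | m.Prime}} :=
    prime_dioph (Dioph.proj_dioph ())
  obtain ⟨n, f, hf⟩ := exists_mem_iff_exists_eval_int_eq_of_dioph hprime
  exact ⟨n, f, fun m => ⟨fun hm => ⟨hm.pos, (hf m hm.pos).1 hm⟩,
    fun ⟨hm, hx⟩ => (hf m hm).2 hx⟩⟩
end

section
/- (Laczkovich) For every complex number x: x is an integer (i.e., there exists m ∈ ℤ with x = m) if and only if x is rational (there exists q ∈ ℚ with x = q) and there exists z ∈ ℂ such that exp(z) = 2 and exp(z·x) is rational (i.e., there exists q ∈ ℚ with exp(z·x) = q). -/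
/-!
If `exp z = a` and `x = k / n` in lowest terms, then `r = exp (z * x)` satisfies `r ^ n = a ^ k`.
When `a` and `r` lie in a common subfield, Bézout's identity for `n` and `k` makes `a` itself an
`n`-th power in that subfield. As `2` is not a proper power in `ℚ`, this forces `n = 1`.
-/

open Complex

section Powers

theorem zpow_mem_range_pow_of_coprime {G₀ : Type*} [CommGroupWithZero G₀] {k : ℤ} {n : ℕ}
    (hkn : k.natAbs.Coprime n) (a : G₀) :
    a ^ k ∈ Set.range (· ^ n : G₀ → G₀) ↔ a ∈ Set.range (· ^ n : G₀ → G₀) := by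
  rw [← pow_mem_range_pow_of_coprime hkn a]
  obtain ⟨j, rfl | rfl⟩ := k.eq_nat_or_neg
  · rw [zpow_natCast, Int.natAbs_natCast]
  · rw [zpow_neg, zpow_natCast, Int.natAbs_neg, Int.natAbs_natCast]
    exact inv_surjective.exists.trans (by simp only [inv_pow, inv_inj, Set.mem_range])

theorem pow_ne_algebraMap_of_irreducible {R K : Type*} [CommRing R] [IsIntegrallyClosed R]
    [CommRing K] [Algebra R K] [IsFractionRing R K] {p : R} (hp : Irreducible p) (b : K) {n : ℕ}
    (hn : n ≠ 1) : b ^ n ≠ algebraMap R K p := by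
  intro hb
  suffices ∃ c : R, c ^ n = p by
    obtain ⟨c, rfl⟩ := this
    exact not_irreducible_pow hn hp
  obtain rfl | hn₀ := n.eq_zero_or_pos
  · exact ⟨1, IsFractionRing.injective R K (by simpa using hb)⟩
  · obtain ⟨c, rfl⟩ : ∃ c : R, algebraMap R K c = b :=
      IsIntegrallyClosed.exists_algebraMap_eq_of_isIntegral_pow hn₀ (hb ▸ isIntegral_algebraMap)
    exact ⟨c, IsFractionRing.injective R K (by simpa using hb)⟩

end Powers

section Exponential

variable {K : Type*} [Field K] [Algebra K ℂ] {a : K} {z : ℂ}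

theorem exp_mul_intCast_eq_algebraMap_zpow (hz : exp z = algebraMap K ℂ a) (m : ℤ) :
    exp (z * m) = algebraMap K ℂ (a ^ m) := by
  rw [mul_comm, exp_int_mul, hz, map_zpow₀]

theorem mem_range_pow_den_of_exp_mul_eq (hz : exp z = algebraMap K ℂ a) {q : ℚ} {r : K}
    (hr : exp (z * q) = algebraMap K ℂ r) : a ∈ Set.range (· ^ q.den : K → K) := by
  have hpow : r ^ q.den = a ^ q.num := by
    apply (algebraMap K ℂ).injective
    calc algebraMap K ℂ (r ^ q.den) = exp (z * (q * q.den)) := by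
          rw [map_pow, ← hr, ← exp_nat_mul]; ring_nf
      _ = exp (z * q.num) := by rw [show (q * q.den : ℂ) = q.num from mod_cast q.mul_den_eq_num]
      _ = algebraMap K ℂ (a ^ q.num) := exp_mul_intCast_eq_algebraMap_zpow hz q.num
  exact (zpow_mem_range_pow_of_coprime q.reduced a).mp ⟨r, hpow⟩

theorem laczkovich_int_def_general (ha : ∀ (b : K) (n : ℕ), n ≠ 1 → b ^ n ≠ a) (x : ℂ) :
    (∃ m : ℤ, x = m) ↔
      ((∃ q : ℚ, x = q) ∧
        ∃ z : ℂ, exp z = algebraMap K ℂ a ∧ ∃ r : K, exp (z * x) = algebraMap K ℂ r) := by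
  constructor
  · rintro ⟨m, rfl⟩
    have ha₀ : algebraMap K ℂ a ≠ 0 :=
      (map_ne_zero _).mpr fun h ↦ ha 0 2 (by decide) (by simp [h])
    have hz : exp (log (algebraMap K ℂ a)) = algebraMap K ℂ a := exp_log ha₀
    exact ⟨⟨m, by simp⟩, _, hz, a ^ m, exp_mul_intCast_eq_algebraMap_zpow hz m⟩
  · rintro ⟨⟨q, rfl⟩, z, hz, r, hr⟩
    obtain ⟨b, hb⟩ := mem_range_pow_den_of_exp_mul_eq hz hr
    have hden : q.den = 1 := by_contra fun hne ↦ ha b q.den hne hb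
    exact ⟨q.num, mod_cast (Rat.coe_int_num_of_den_eq_one hden).symm⟩

end Exponential

/-- Laczkovich's existential definition of `ℤ` in the complex exponential field. -/
theorem laczkovich_int_def (x : ℂ) :
    (∃ m : ℤ, x = m) ↔
      ((∃ q : ℚ, x = q) ∧
        ∃ z : ℂ, Complex.exp z = 2 ∧ ∃ q : ℚ, Complex.exp (z * x) = q) := by
  simpa using laczkovich_int_def_general (K := ℚ)
    (fun b _ hn ↦ pow_ne_algebraMap_of_irreducible Int.prime_two.irreducible b hn) x
end
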